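/- Let ω̃ and ω be Kähler metrics on a complex manifold M with Ric ω̃ ≥ −ω̃ and the holomorphic bisectional curvature of ω bounded above by a constant C₁ > 0. Then the function v := log tr_{ω̃} ω satisfies the differential inequality Δ_{ω̃} v ≥ −1 − 2C₁ e^{v} on M. -/

import Mathlib

open MeasureTheory Filter Topology
open scoped ComplexOrder

noncomputable section

abbrev Cn (n : ℕ) := Fin n → ℂ

/-- Wirtinger derivative `∂/∂z_k`. -/
def wder {n : ℕ} (k : Fin n) (F : Cn n → ℂ) (z : Cn n) : ℂ :=
  (1 / 2) * (fderiv ℝ F z (Pi.single k 1) - Complex.I * fderiv ℝ F z (Pi.single k Complex.I))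

/-- Wirtinger derivative `∂/∂z̄_k`. -/
def wbar {n : ℕ} (k : Fin n) (F : Cn n → ℂ) (z : Cn n) : ℂ :=
  (1 / 2) * (fderiv ℝ F z (Pi.single k 1) + Complex.I * fderiv ℝ F z (Pi.single k Complex.I))

/-- A Kähler metric on an open set `Ω ⊆ ℂⁿ`, given by its matrix of coefficients
`g_{i j̄}`: smooth, pointwise positive definite, and `d`-closed (`∂_k g_{i j̄} = ∂_i g_{k j̄}`). -/
structure IsKahlerMetricOn {n : ℕ} (g : Cn n → Matrix (Fin n) (Fin n) ℂ)
    (Ω : Set (Cn n)) : Prop where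
  smooth : ∀ i j, ContDiffOn ℝ (⊤ : ℕ∞) (fun z => g z i j) Ω
  posdef : ∀ z ∈ Ω, (g z).PosDef
  kahler : ∀ z ∈ Ω, ∀ i j k, wder k (fun w => g w i j) z = wder i (fun w => g w k j) z

/-- Ricci curvature `Ric_{i j̄} = −∂_i ∂̄_j log det g` of a Kähler metric `g`. -/
def RicciM {n : ℕ} (g : Cn n → Matrix (Fin n) (Fin n) ℂ) (z : Cn n) :
    Matrix (Fin n) (Fin n) ℂ :=
  Matrix.of fun i j => -wder i (fun w => wbar j (fun y => Complex.log (g y).det) w) z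

/-- Curvature tensor `R_{i j̄ k l̄} = −∂_k ∂̄_l g_{i j̄} + g^{p q̄} (∂_k g_{i q̄})(∂̄_l g_{p j̄})`. -/
def curvT {n : ℕ} (g : Cn n → Matrix (Fin n) (Fin n) ℂ) (z : Cn n)
    (i j k l : Fin n) : ℂ :=
  -wder k (fun w => wbar l (fun y => g y i j) w) z +
    ∑ p : Fin n, ∑ q : Fin n,
      (g z)⁻¹ q p * wder k (fun w => g w i q) z * wbar l (fun w => g w p j) z

/-- Hermitian pairing `⟨ξ, η⟩_g = ∑ g_{i j̄} ξ_i η̄_j`. -/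
def herm {n : ℕ} (g : Cn n → Matrix (Fin n) (Fin n) ℂ) (z : Cn n) (ξ η : Fin n → ℂ) : ℂ :=
  ∑ i : Fin n, ∑ j : Fin n, g z i j * ξ i * star (η j)

/-- Complex Laplacian `Δ_g v = g^{i j̄} ∂_i ∂̄_j v` of a real-valued function `v`. -/
def cLap {n : ℕ} (g : Cn n → Matrix (Fin n) (Fin n) ℂ) (v : Cn n → ℝ) (z : Cn n) : ℝ :=
  (∑ i : Fin n, ∑ j : Fin n,
    (g z)⁻¹ j i * wder i (fun w => wbar j (fun y => ((v y : ℂ))) w) z).re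

section WirtingerCalculus

variable {n : ℕ}

/-- The complex combination `½ (∂_u + e ∂_v)` of two real directional derivatives. -/
def dirD (u v : Cn n) (e : ℂ) (F : Cn n → ℂ) (z : Cn n) : ℂ :=
  (1 / 2) * (fderiv ℝ F z u + e * fderiv ℝ F z v)

lemma wder_eq_dirD (k : Fin n) :
    wder k = dirD (Pi.single k 1) (Pi.single k Complex.I) (-Complex.I) := by
  funext F z
  simp only [wder, dirD]
  ring

lemma wbar_eq_dirD (k : Fin n) :
    wbar k = dirD (Pi.single k 1) (Pi.single k Complex.I) Complex.I := rfl

/-- Entrywise `dirD` of a matrix-valued function. -/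
def matD (u v : Cn n) (e : ℂ) (M : Cn n → Matrix (Fin n) (Fin n) ℂ) (z : Cn n) :
    Matrix (Fin n) (Fin n) ℂ :=
  Matrix.of fun i j => dirD u v e (fun w => M w i j) z

/-- Entrywise smoothness of a matrix-valued function on a set. -/
def MatSmooth (M : Cn n → Matrix (Fin n) (Fin n) ℂ) (Ω : Set (Cn n)) : Prop :=
  ∀ i j, ContDiffOn ℝ (⊤ : ℕ∞) (fun z => M z i j) Ω

variable {Ω : Set (Cn n)} {u v : Cn n} {e : ℂ} {F G : Cn n → ℂ}
  {M N : Cn n → Matrix (Fin n) (Fin n) ℂ} {z : Cn n}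

lemma dirD_congr (hΩ : IsOpen Ω) (hz : z ∈ Ω) (h : ∀ w ∈ Ω, F w = G w) :
    dirD u v e F z = dirD u v e G z := by
  have : F =ᶠ[𝓝 z] G := Filter.eventually_of_mem (hΩ.mem_nhds hz) h
  simp only [dirD, this.fderiv_eq]

lemma dirD_const (c : ℂ) : dirD u v e (fun _ => c) z = 0 := by
  simp [dirD]

lemma ContDiffOn.differentiableAt_of_isOpen (hF : ContDiffOn ℝ (⊤ : ℕ∞) F Ω) (hΩ : IsOpen Ω)
    (hz : z ∈ Ω) : DifferentiableAt ℝ F z :=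
  (hF.contDiffAt (hΩ.mem_nhds hz)).differentiableAt (by simp)

lemma dirD_add (hF : DifferentiableAt ℝ F z) (hG : DifferentiableAt ℝ G z) :
    dirD u v e (fun w => F w + G w) z = dirD u v e F z + dirD u v e G z := by
  simp only [dirD, fderiv_fun_add hF hG, add_apply]
  ring

lemma dirD_neg : dirD u v e (fun w => -F w) z = -dirD u v e F z := by
  simp only [dirD, fderiv_fun_neg, neg_apply]
  ring

lemma dirD_mul (hF : DifferentiableAt ℝ F z) (hG : DifferentiableAt ℝ G z) :
    dirD u v e (fun w => F w * G w) z = dirD u v e F z * G z + F z * dirD u v e G z := by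
  simp only [dirD, fderiv_fun_mul hF hG, add_apply, smul_apply, smul_eq_mul]
  ring

lemma dirD_sum {ι : Type*} (s : Finset ι) {f : ι → Cn n → ℂ}
    (hf : ∀ i ∈ s, DifferentiableAt ℝ (f i) z) :
    dirD u v e (fun w => ∑ i ∈ s, f i w) z = ∑ i ∈ s, dirD u v e (f i) z := by
  simp only [dirD, fderiv_fun_sum hf, sum_apply, Finset.mul_sum, Finset.sum_add_distrib, mul_add]

lemma dirD_star : dirD u v (star e) (fun w => star (F w)) z = star (dirD u v e F z) := by
  have h : fderiv ℝ (fun w => star (F w)) z = _ := fderiv_star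
  simp only [dirD, h, ContinuousLinearMap.comp_apply, ContinuousLinearEquiv.coe_coe,
    starL'_apply]
  simp

lemma dirD_comp {f : ℂ → ℂ} {f' : ℂ} (hf : HasDerivAt f f' (F z)) (hF : DifferentiableAt ℝ F z) :
    dirD u v e (fun w => f (F w)) z = f' * dirD u v e F z := by
  have h := ((hf.hasFDerivAt.restrictScalars ℝ).comp z hF.hasFDerivAt).fderiv
  have h' : fderiv ℝ (fun w => f (F w)) z = _ := h
  simp only [dirD, h', ContinuousLinearMap.comp_apply, ContinuousLinearMap.coe_restrictScalars',
    ContinuousLinearMap.toSpanSingleton_apply, smul_eq_mul]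
  ring

lemma contDiffOn_dirD (hΩ : IsOpen Ω) (hF : ContDiffOn ℝ (⊤ : ℕ∞) F Ω) :
    ContDiffOn ℝ (⊤ : ℕ∞) (dirD u v e F) Ω := by
  have h : ContDiffOn ℝ (⊤ : ℕ∞) (fderiv ℝ F) Ω := hF.fderiv_of_isOpen hΩ (by simp)
  exact contDiffOn_const.mul ((h.clm_apply contDiffOn_const).add
    (contDiffOn_const.mul (h.clm_apply contDiffOn_const)))

lemma dirD_comm (hΩ : IsOpen Ω) (hF : ContDiffOn ℝ (⊤ : ℕ∞) F Ω) (hz : z ∈ Ω)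
    {u' v' : Cn n} {e' : ℂ} :
    dirD u v e (dirD u' v' e' F) z = dirD u' v' e' (dirD u v e F) z := by
  have hd : DifferentiableAt ℝ (fderiv ℝ F) z :=
    ((hF.fderiv_of_isOpen (m := (⊤ : ℕ∞)) hΩ (by simp)).contDiffAt
      (hΩ.mem_nhds hz)).differentiableAt (by simp)
  have hs : IsSymmSndFDerivAt ℝ F z :=
    (hF.contDiffAt (hΩ.mem_nhds hz)).isSymmSndFDerivAt (by
      rw [minSmoothness_of_isRCLikeNormedField]
      exact WithTop.coe_le_coe.2 le_top)
  have key : ∀ (a b : Cn n) (c : ℂ) (x : Cn n), fderiv ℝ (dirD a b c F) z x =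
      (1 / 2) * (fderiv ℝ (fderiv ℝ F) z x a + c * fderiv ℝ (fderiv ℝ F) z x b) := by
    intro a b c x
    have h1 : ∀ y : Cn n, HasFDerivAt (fun w => fderiv ℝ F w y)
        ((fderiv ℝ (fderiv ℝ F) z).flip y) z := fun y => by
      simpa using hd.hasFDerivAt.clm_apply (hasFDerivAt_const y z)
    have h2 := ((h1 a).add ((h1 b).const_mul c)).const_mul (1 / 2 : ℂ)
    have h3 : fderiv ℝ (dirD a b c F) z = _ := h2.fderiv
    simp [h3, mul_add]
  rw [dirD, dirD, key, key, key, key, hs.eq u u', hs.eq u v', hs.eq v u', hs.eq v v']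
  ring

lemma MatSmooth.mul (hM : MatSmooth M Ω) (hN : MatSmooth N Ω) :
    MatSmooth (fun w => M w * N w) Ω := fun i j => by
  simp only [Matrix.mul_apply]
  exact ContDiffOn.sum fun k _ => (hM i k).mul (hN k j)

lemma MatSmooth.add (hM : MatSmooth M Ω) (hN : MatSmooth N Ω) :
    MatSmooth (fun w => M w + N w) Ω := fun i j => (hM i j).add (hN i j)

lemma MatSmooth.neg (hM : MatSmooth M Ω) : MatSmooth (fun w => -M w) Ω :=
  fun i j => (hM i j).neg

lemma MatSmooth.matD (hM : MatSmooth M Ω) (hΩ : IsOpen Ω) : MatSmooth (matD u v e M) Ω :=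
  fun i j => contDiffOn_dirD hΩ (hM i j)

lemma MatSmooth.trace (hM : MatSmooth M Ω) :
    ContDiffOn ℝ (⊤ : ℕ∞) (fun w => (M w).trace) Ω := by
  simp only [Matrix.trace, Matrix.diag]
  exact ContDiffOn.sum fun k _ => hM k k

lemma MatSmooth.det (hM : MatSmooth M Ω) :
    ContDiffOn ℝ (⊤ : ℕ∞) (fun w => (M w).det) Ω := by
  simp only [Matrix.det_apply]
  exact ContDiffOn.sum fun σ _ => (contDiffOn_prod fun i _ => hM (σ i) i).const_smul _

lemma MatSmooth.inv (hM : MatSmooth M Ω) (h : ∀ w ∈ Ω, (M w).det ≠ 0) :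
    MatSmooth (fun w => (M w)⁻¹) Ω := fun i j => by
  have h1 : ContDiffOn ℝ (⊤ : ℕ∞) (fun w => (M w).adjugate i j) Ω := by
    simp only [Matrix.adjugate_apply]
    refine MatSmooth.det (M := fun w => (M w).updateRow j (Pi.single i 1)) fun a b => ?_
    by_cases hab : a = j
    · subst hab
      simpa using contDiffOn_const
    · simpa [hab] using hM a b
  simpa [Matrix.inv_def] using (hM.det.inv h).mul h1

lemma matD_congr (hΩ : IsOpen Ω) (hz : z ∈ Ω) (h : ∀ w ∈ Ω, M w = N w) :
    matD u v e M z = matD u v e N z := by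
  ext i j
  exact dirD_congr hΩ hz fun w hw => by rw [h w hw]

lemma matD_add (hΩ : IsOpen Ω) (hz : z ∈ Ω) (hM : MatSmooth M Ω) (hN : MatSmooth N Ω) :
    matD u v e (fun w => M w + N w) z = matD u v e M z + matD u v e N z := by
  ext i j
  exact dirD_add ((hM i j).differentiableAt_of_isOpen hΩ hz)
    ((hN i j).differentiableAt_of_isOpen hΩ hz)

lemma matD_neg : matD u v e (fun w => -M w) z = -matD u v e M z := by
  ext i j
  exact dirD_neg

lemma matD_mul (hΩ : IsOpen Ω) (hz : z ∈ Ω) (hM : MatSmooth M Ω) (hN : MatSmooth N Ω) :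
    matD u v e (fun w => M w * N w) z = matD u v e M z * N z + M z * matD u v e N z := by
  ext i j
  have hM' := fun i j => (hM i j).differentiableAt_of_isOpen hΩ hz
  have hN' := fun i j => (hN i j).differentiableAt_of_isOpen hΩ hz
  simp only [matD, Matrix.mul_apply, Matrix.add_apply, Matrix.of_apply]
  rw [← Finset.sum_add_distrib]
  exact (dirD_sum _ fun k _ => (hM' i k).mul (hN' k j)).trans
    (Finset.sum_congr rfl fun k _ => dirD_mul (hM' i k) (hN' k j))

lemma dirD_trace (hΩ : IsOpen Ω) (hz : z ∈ Ω) (hM : MatSmooth M Ω) :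
    dirD u v e (fun w => (M w).trace) z = (matD u v e M z).trace :=
  dirD_sum _ fun k _ => (hM k k).differentiableAt_of_isOpen hΩ hz

lemma matD_conjTranspose :
    matD u v (star e) (fun w => (M w).conjTranspose) z = (matD u v e M z).conjTranspose := by
  ext i j
  exact dirD_star

lemma matD_inv (hΩ : IsOpen Ω) (hz : z ∈ Ω) (hM : MatSmooth M Ω)
    (h : ∀ w ∈ Ω, (M w).det ≠ 0) :
    matD u v e (fun w => (M w)⁻¹) z = -((M z)⁻¹ * matD u v e M z * (M z)⁻¹) := by
  have hu : ∀ w ∈ Ω, IsUnit (M w).det := fun w hw => (h w hw).isUnit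
  have h1 : matD u v e (fun w => (M w)⁻¹ * M w) z = 0 := by
    rw [matD_congr hΩ hz (N := fun _ => 1) fun w hw => Matrix.nonsing_inv_mul _ (hu w hw)]
    ext i j
    exact dirD_const _
  rw [matD_mul hΩ hz (hM.inv h) hM] at h1
  have h2 := congrArg (· * (M z)⁻¹) h1
  simp only [add_mul, zero_mul] at h2
  rw [mul_assoc _ (M z), Matrix.mul_nonsing_inv _ (hu z hz), mul_one] at h2
  exact eq_neg_of_add_eq_zero_left h2

/-- Jacobi's formula for the derivative of a determinant. -/
lemma dirD_det (hΩ : IsOpen Ω) (hz : z ∈ Ω) (hM : MatSmooth M Ω) :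
    dirD u v e (fun w => (M w).det) z = ((M z).adjugate * matD u v e M z).trace := by
  let f : ContinuousMultilinearMap ℝ (fun _ : Fin n => Fin n → ℂ) ℂ :=
    { ((Matrix.detRowAlternating (R := ℂ) (n := Fin n)).toMultilinearMap.restrictScalars ℝ) with
      cont := by exact Continuous.matrix_det continuous_id }
  have hd : HasFDerivAt (fun w => (M w : Fin n → Fin n → ℂ))
      (ContinuousLinearMap.pi fun i => ContinuousLinearMap.pi fun j =>
        fderiv ℝ (fun w => M w i j) z) z :=
    hasFDerivAt_pi.2 fun i => hasFDerivAt_pi.2 fun j =>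
      ((hM i j).differentiableAt_of_isOpen hΩ hz).hasFDerivAt
  have h := ((f.hasFDerivAt (M z)).comp z hd).fderiv
  have h' : fderiv ℝ (fun w => (M w).det) z = _ := h
  have hupd : ∀ (i : Fin n) (y : Fin n → ℂ),
      f (Function.update (M z) i y) = ∑ j, (M z).adjugate j i * y j := by
    intro i y
    change ((M z).updateRow i y).det = _
    rw [← Matrix.cramer_transpose_apply, Matrix.cramer_eq_adjugate_mulVec,
      ← Matrix.adjugate_transpose]
    rfl
  have hlin : ∀ x : Fin n → Fin n → ℂ, f.linearDeriv (M z) x =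
      ∑ i, ∑ j, (M z).adjugate j i * x i j := fun x =>
    (f.linearDeriv_apply (M z) x).trans (Finset.sum_congr rfl fun i _ => hupd i (x i))
  rw [dirD, h', ContinuousLinearMap.comp_apply, ContinuousLinearMap.comp_apply, hlin, hlin]
  simp only [ContinuousLinearMap.pi_apply, Matrix.trace, Matrix.diag, Matrix.mul_apply, matD,
    Matrix.of_apply, dirD]
  rw [Finset.sum_comm, Finset.sum_comm (f := fun i j => (M z).adjugate j i * _)]
  simp only [Finset.mul_sum, ← Finset.sum_add_distrib]
  refine Finset.sum_congr rfl fun i _ => Finset.sum_congr rfl fun j _ => ?_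
  ring

lemma dirD_log_det (hΩ : IsOpen Ω) (hz : z ∈ Ω) (hM : MatSmooth M Ω)
    (hs : (M z).det ∈ Complex.slitPlane) :
    dirD u v e (fun w => Complex.log (M w).det) z = ((M z)⁻¹ * matD u v e M z).trace := by
  rw [dirD_comp (Complex.hasDerivAt_log hs) (hM.det.differentiableAt_of_isOpen hΩ hz),
    dirD_det hΩ hz hM, Matrix.inv_def, Matrix.smul_mul, Matrix.trace_smul, smul_eq_mul,
    Ring.inverse_eq_inv']

end WirtingerCalculus

section MatrixIdentities

variable {n : ℕ}

/-- A positive semidefinite matrix factors as `Bᴴ * B`. -/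
lemma Matrix.PosSemidef.exists_eq_conjTranspose_mul_self {H : Matrix (Fin n) (Fin n) ℂ}
    (hH : H.PosSemidef) : ∃ B : Matrix (Fin n) (Fin n) ℂ, H = B.conjTranspose * B := by
  open scoped MatrixOrder in
  exact CStarAlgebra.nonneg_iff_eq_star_mul_self.1 hH.nonneg

lemma Matrix.PosSemidef.trace_mul_nonneg {P N : Matrix (Fin n) (Fin n) ℂ}
    (hP : P.PosSemidef) (hN : N.PosSemidef) : 0 ≤ (P * N).trace := by
  obtain ⟨B, rfl⟩ := hP.exists_eq_conjTranspose_mul_self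
  rw [mul_assoc, Matrix.trace_mul_comm]
  exact (hN.mul_mul_conjTranspose_same B).trace_nonneg

lemma Matrix.PosDef.trace_mul_pos [Nonempty (Fin n)] {P N : Matrix (Fin n) (Fin n) ℂ}
    (hP : P.PosDef) (hN : N.PosDef) : 0 < (P * N).trace := by
  obtain ⟨B, hB⟩ := hP.posSemidef.exists_eq_conjTranspose_mul_self
  have hBu : IsUnit B := by
    rw [Matrix.isUnit_iff_isUnit_det]
    have h := hP.isUnit
    rw [hB, Matrix.isUnit_iff_isUnit_det, Matrix.det_mul] at h
    exact isUnit_of_mul_isUnit_right h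
  rw [hB, mul_assoc, Matrix.trace_mul_comm]
  exact (hN.mul_mul_conjTranspose_same (Matrix.vecMul_injective_of_isUnit hBu)).trace_pos

lemma sum_mul_trace_conjTranspose_nonneg {H G : Matrix (Fin n) (Fin n) ℂ}
    (hH : H.PosSemidef) (hG : G.PosSemidef) (Y : Fin n → Matrix (Fin n) (Fin n) ℂ) :
    0 ≤ ∑ k, ∑ l, H l k * (H * Y k * G * (Y l).conjTranspose).trace := by
  obtain ⟨B, hB⟩ := hH.exists_eq_conjTranspose_mul_self
  have key : ∑ k, ∑ l, H l k * (H * Y k * G * (Y l).conjTranspose).trace =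
      ∑ m, (H * ((∑ k, B m k • Y k) * G * (∑ k, B m k • Y k).conjTranspose)).trace := by
    have h1 : ∀ k l, H l k = ∑ m, star (B m l) * B m k := fun k l => by
      rw [hB]; simp [Matrix.mul_apply]
    have h2 : ∀ m, (H * ((∑ k, B m k • Y k) * G * (∑ k, B m k • Y k).conjTranspose)).trace =
        ∑ k, ∑ l, star (B m l) * B m k * (H * Y k * G * (Y l).conjTranspose).trace := fun m => by
      simp only [Matrix.conjTranspose_sum, Matrix.conjTranspose_smul, Finset.sum_mul,
        Finset.mul_sum, Matrix.trace_sum, Matrix.smul_mul, Matrix.mul_smul, Matrix.trace_smul,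
        smul_eq_mul, mul_assoc]
      rw [Finset.sum_comm]
    simp only [h2]
    rw [Finset.sum_comm_cycle, Finset.sum_comm_cycle]
    refine Finset.sum_congr rfl fun k _ => Finset.sum_congr rfl fun l _ => ?_
    rw [h1, Finset.sum_mul]
  rw [key]
  exact Finset.sum_nonneg fun m _ => hH.trace_mul_nonneg (hG.mul_mul_conjTranspose_same _)

lemma sum_six_comm (f : Fin n → Fin n → Fin n → Fin n → Fin n → Fin n → ℂ) :
    ∑ a, ∑ b, ∑ i, ∑ j, ∑ k, ∑ l, f a b i j k l =
      ∑ k, ∑ l, ∑ i, ∑ j, ∑ a, ∑ b, f a b i j k l := by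
  have h := Fintype.sum_equiv
    (⟨fun ⟨a, b, i, j, k, l⟩ => ⟨k, l, i, j, a, b⟩, fun ⟨k, l, i, j, a, b⟩ => ⟨a, b, i, j, k, l⟩,
      fun _ => rfl, fun _ => rfl⟩ :
      Fin n × Fin n × Fin n × Fin n × Fin n × Fin n ≃
        Fin n × Fin n × Fin n × Fin n × Fin n × Fin n)
    (fun ⟨a, b, i, j, k, l⟩ => f a b i j k l) (fun ⟨k, l, i, j, a, b⟩ => f a b i j k l)
    fun _ => rfl
  simpa only [Fintype.sum_prod_type] using h

lemma trace_mul_mul_mul (A B C D : Matrix (Fin n) (Fin n) ℂ) :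
    (A * B * C * D).trace = ∑ a, ∑ b, ∑ c, ∑ d, A a b * B b c * C c d * D d a := by
  simp only [Matrix.trace, Matrix.diag, Matrix.mul_apply, Finset.sum_mul]
  refine Finset.sum_congr rfl fun a _ => ?_
  rw [Finset.sum_comm_cycle]
  exact Finset.sum_congr rfl fun b _ => Finset.sum_comm

/-- The trace over `H = Bᴴ B` in both slots of a curvature-type tensor, bounded through its values
on decomposable arguments. -/
lemma sum_curvature_le {H g : Matrix (Fin n) (Fin n) ℂ} (hH : H.PosSemidef)
    {R : Fin n → Fin n → Fin n → Fin n → ℂ} {C : ℝ}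
    (hR : ∀ ξ η : Fin n → ℂ,
      (∑ i, ∑ j, ∑ k, ∑ l, R i j k l * ξ i * star (ξ j) * η k * star (η l)).re ≤
        C * (∑ i, ∑ j, g i j * ξ i * star (ξ j)).re * (∑ i, ∑ j, g i j * η i * star (η j)).re) :
    (∑ k, ∑ l, H l k * ∑ i, ∑ j, H j i * R i j k l).re ≤ C * (H * g).trace.re ^ 2 := by
  obtain ⟨B, hB⟩ := hH.exists_eq_conjTranspose_mul_self
  have h1 : ∀ k l, H l k = ∑ m, star (B m l) * B m k := fun k l => by
    rw [hB]; simp [Matrix.mul_apply]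
  have hL : ∑ k, ∑ l, H l k * ∑ i, ∑ j, H j i * R i j k l =
      ∑ m, ∑ m', ∑ i, ∑ j, ∑ k, ∑ l,
        R i j k l * B m i * star (B m j) * B m' k * star (B m' l) := by
    rw [sum_six_comm fun m m' i j k l =>
      R i j k l * B m i * star (B m j) * B m' k * star (B m' l)]
    refine Finset.sum_congr rfl fun k _ => Finset.sum_congr rfl fun l _ => ?_
    rw [Finset.mul_sum]
    refine Finset.sum_congr rfl fun i _ => ?_
    rw [Finset.mul_sum]
    refine Finset.sum_congr rfl fun j _ => ?_
    rw [← mul_assoc, h1, h1, Finset.sum_mul_sum, Finset.sum_mul, Finset.sum_comm]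
    refine Finset.sum_congr rfl fun m _ => ?_
    rw [Finset.sum_mul]
    refine Finset.sum_congr rfl fun m' _ => ?_
    ring
  have hT : (H * g).trace = ∑ m, ∑ i, ∑ j, g i j * B m i * star (B m j) := by
    simp only [Matrix.trace, Matrix.diag, Matrix.mul_apply, h1, Finset.sum_mul]
    rw [Finset.sum_comm_cycle]
    refine Finset.sum_congr rfl fun m _ => ?_
    rw [Finset.sum_comm]
    refine Finset.sum_congr rfl fun i _ => Finset.sum_congr rfl fun j _ => ?_
    ring
  rw [hL, hT, pow_two, Complex.re_sum, Complex.re_sum, Finset.sum_mul_sum, Finset.mul_sum]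
  refine Finset.sum_le_sum fun m _ => ?_
  rw [Complex.re_sum, Finset.mul_sum]
  exact Finset.sum_le_sum fun m' _ => (hR (B m) (B m')).trans_eq (mul_assoc _ _ _)

/-- The matrix identity behind the Chern–Lu formula: contraction of `∂_k ∂̄_l tr (H g)`, where
`H` is inverse to `h` and `G` to `g`, in terms of curvature, Ricci curvature and a square. -/
lemma sum_mul_trace_eq {H G g : Matrix (Fin n) (Fin n) ℂ}
    {hk hb gk gb : Fin n → Matrix (Fin n) (Fin n) ℂ}
    {hkb gkb : Fin n → Fin n → Matrix (Fin n) (Fin n) ℂ} (hgG : g * G = 1) (hGg : G * g = 1)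
    (sk : ∀ k i j, hk k i j = hk i k j) (sb : ∀ l i j, hb l i j = hb j i l)
    (skb : ∀ k l i j, hkb k l i j = hkb i j k l) :
    ∑ k, ∑ l, H l k * (-((-(H * hk k * H) * hb l + H * hkb k l) * H
        + H * hb l * -(H * hk k * H)) * g + -(H * hb l * H) * gk k
        + (-(H * hk k * H) * gb l + H * gkb k l)).trace =
      -(∑ k, ∑ l, H l k * ∑ i, ∑ j, H j i *
          (-gkb k l i j + ∑ p, ∑ q, G q p * gk k i q * gb l p j)) +
        ∑ i, ∑ j, (H * g * H) j i * -(-(H * hk i * H) * hb j + H * hkb i j).trace +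
        ∑ k, ∑ l, H l k *
          (H * (gk k - hk k * H * g) * G * (gb l - g * H * hb l)).trace := by
  have e1 : ∀ k l, ∑ i, ∑ j, H j i * (-gkb k l i j + ∑ p, ∑ q, G q p * gk k i q * gb l p j) =
      -(H * gkb k l).trace + (H * gk k * G * gb l).trace := by
    intro k l
    rw [trace_mul_mul_mul]
    simp only [mul_add, mul_neg, Finset.sum_add_distrib, Finset.sum_neg_distrib, Matrix.trace,
      Matrix.diag, Matrix.mul_apply, Finset.mul_sum]
    congr 1
    · rw [Finset.sum_comm]
    · rw [Finset.sum_comm]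
      refine Finset.sum_congr rfl fun j _ => Finset.sum_congr rfl fun i _ => ?_
      rw [Finset.sum_comm]
      refine Finset.sum_congr rfl fun q _ => Finset.sum_congr rfl fun p _ => ?_
      ring
  have e2 : ∑ k, ∑ l, H l k * (H * hkb k l * H * g).trace =
      ∑ i, ∑ j, (H * g * H) j i * (H * hkb i j).trace := by
    have hc : ∀ k l, (H * hkb k l * H * g).trace = (H * g * H * hkb k l).trace := fun k l => by
      rw [mul_assoc _ H g, Matrix.trace_mul_comm]
      simp only [mul_assoc]
    simp only [hc]
    simp only [Matrix.trace, Matrix.diag, Matrix.mul_apply (M := H * g * H),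
      Matrix.mul_apply (M := H) (N := hkb _ _), Finset.mul_sum]
    have h := Fintype.sum_equiv
      (⟨fun ⟨k, l, a, b⟩ => ⟨b, a, l, k⟩, fun ⟨b, a, l, k⟩ => ⟨k, l, a, b⟩,
        fun _ => rfl, fun _ => rfl⟩ :
        Fin n × Fin n × Fin n × Fin n ≃ Fin n × Fin n × Fin n × Fin n)
      (fun ⟨k, l, a, b⟩ => H l k * ((H * g * H) a b * hkb k l b a))
      (fun ⟨i, j, a, b⟩ => (H * g * H) j i * (H a b * hkb i j b a))
      fun ⟨k, l, a, b⟩ => by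
        simp only [Equiv.coe_fn_mk, skb k l]
        ring
    simpa only [Fintype.sum_prod_type] using h
  have e3 : ∑ k, ∑ l, H l k * (H * hk k * H * hb l * H * g).trace =
      ∑ i, ∑ j, (H * g * H) j i * (H * hk i * H * hb j).trace := by
    have hc : ∀ k l, (H * hk k * H * hb l * H * g).trace =
        (hk k * H * hb l * (H * g * H)).trace := fun k l => by
      rw [Matrix.trace_mul_comm (hk k * H * hb l), mul_assoc (_ * _ * _) H g,
        Matrix.trace_mul_comm (_ * _ * _) (H * g)]
      simp only [mul_assoc]
    simp only [hc, trace_mul_mul_mul, Finset.mul_sum]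
    have h := Fintype.sum_equiv
      (⟨fun ⟨k, l, a, b, c, d⟩ => ⟨a, d, l, k, b, c⟩, fun ⟨a, d, l, k, b, c⟩ => ⟨k, l, a, b, c, d⟩,
        fun _ => rfl, fun _ => rfl⟩ :
        Fin n × Fin n × Fin n × Fin n × Fin n × Fin n ≃
          Fin n × Fin n × Fin n × Fin n × Fin n × Fin n)
      (fun ⟨k, l, a, b, c, d⟩ => H l k * (hk k a b * H b c * hb l c d * (H * g * H) d a))
      (fun ⟨i, j, x, y, z, w⟩ => (H * g * H) j i * (H x y * hk i y z * H z w * hb j w x))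
      fun ⟨k, l, a, b, c, d⟩ => by
        simp only [Equiv.coe_fn_mk, sk k, sb l]
        ring
    simpa only [Fintype.sum_prod_type] using h
  have e4 : ∀ k l, (H * (gk k - hk k * H * g) * G * (gb l - g * H * hb l)).trace =
      (H * gk k * G * gb l).trace - (H * hb l * H * gk k).trace - (H * hk k * H * gb l).trace
        + (H * hb l * H * hk k * H * g).trace := by
    intro k l
    have h1 : H * (gk k - hk k * H * g) * G * (gb l - g * H * hb l) =
        H * gk k * G * gb l - H * gk k * (G * g) * H * hb l - H * hk k * H * (g * G) * gb l
          + H * hk k * H * (g * G) * g * H * hb l := by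
      noncomm_ring
    rw [h1, hGg, hgG]
    simp only [mul_one, Matrix.trace_add, Matrix.trace_sub]
    have h2 := Matrix.trace_mul_comm (H * gk k) (H * hb l)
    have h3 := Matrix.trace_mul_comm (H * hk k * H * g) (H * hb l)
    simp only [mul_assoc] at h2 h3 ⊢
    rw [h2, h3]
  have e5 : ∀ k l, (-((-(H * hk k * H) * hb l + H * hkb k l) * H
        + H * hb l * -(H * hk k * H)) * g + -(H * hb l * H) * gk k
        + (-(H * hk k * H) * gb l + H * gkb k l)).trace =
      (H * hk k * H * hb l * H * g).trace - (H * hkb k l * H * g).trace +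
      (H * hb l * H * hk k * H * g).trace - (H * hb l * H * gk k).trace
      - (H * hk k * H * gb l).trace + (H * gkb k l).trace := by
    intro k l
    simp only [← Matrix.trace_add, ← Matrix.trace_sub]
    congr 1
    noncomm_ring
  have e6 : ∀ i j, -(-(H * hk i * H) * hb j + H * hkb i j).trace =
      (H * hk i * H * hb j).trace - (H * hkb i j).trace := by
    intro i j
    simp only [neg_mul, Matrix.trace_add, Matrix.trace_neg]
    ring
  simp only [e1, e4, e5, e6]
  simp only [mul_add, mul_sub, mul_neg, Finset.sum_add_distrib,
    Finset.sum_sub_distrib, Finset.sum_neg_distrib, e2, e3]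
  ring

end MatrixIdentities

section SecondDerivatives

variable {n : ℕ} {Ω : Set (Cn n)} {z : Cn n} {g h : Cn n → Matrix (Fin n) (Fin n) ℂ}

/-- Entrywise `∂/∂z_k` of a matrix-valued function. -/
abbrev matW (k : Fin n) (M : Cn n → Matrix (Fin n) (Fin n) ℂ) :
    Cn n → Matrix (Fin n) (Fin n) ℂ :=
  matD (Pi.single k 1) (Pi.single k Complex.I) (-Complex.I) M

/-- Entrywise `∂/∂z̄_k` of a matrix-valued function. -/
abbrev matWbar (k : Fin n) (M : Cn n → Matrix (Fin n) (Fin n) ℂ) :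
    Cn n → Matrix (Fin n) (Fin n) ℂ :=
  matD (Pi.single k 1) (Pi.single k Complex.I) Complex.I M

lemma matW_apply (k i j : Fin n) (M : Cn n → Matrix (Fin n) (Fin n) ℂ) (z : Cn n) :
    matW k M z i j = wder k (fun w => M w i j) z := by
  rw [wder_eq_dirD]; rfl

lemma matWbar_apply (k i j : Fin n) (M : Cn n → Matrix (Fin n) (Fin n) ℂ) (z : Cn n) :
    matWbar k M z i j = wbar k (fun w => M w i j) z := rfl

lemma IsKahlerMetricOn.det_ne_zero (hg : IsKahlerMetricOn g Ω) :
    ∀ w ∈ Ω, (g w).det ≠ 0 := fun w hw => (hg.posdef w hw).det_pos.ne'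

lemma IsKahlerMetricOn.matWbar_eq (hg : IsKahlerMetricOn g Ω) (hΩ : IsOpen Ω) (hz : z ∈ Ω)
    (l : Fin n) : matWbar l g z = (matW l g z).conjTranspose := by
  have h := matD_conjTranspose (u := Pi.single l 1) (v := Pi.single l Complex.I)
    (e := -Complex.I) (M := g) (z := z)
  rw [← h, show star (-Complex.I) = Complex.I by simp]
  exact matD_congr hΩ hz fun w hw => (hg.posdef w hw).isHermitian.symm

lemma IsKahlerMetricOn.matW_symm (hg : IsKahlerMetricOn g Ω) (hz : z ∈ Ω) (k i j : Fin n) :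
    matW k g z i j = matW i g z k j := by
  rw [matW_apply, matW_apply, hg.kahler z hz]

lemma IsKahlerMetricOn.matWbar_symm (hg : IsKahlerMetricOn g Ω) (hΩ : IsOpen Ω) (hz : z ∈ Ω)
    (l i j : Fin n) : matWbar l g z i j = matWbar j g z i l := by
  rw [hg.matWbar_eq hΩ hz, hg.matWbar_eq hΩ hz, Matrix.conjTranspose_apply,
    Matrix.conjTranspose_apply, hg.matW_symm hz]

lemma IsKahlerMetricOn.matW_matWbar_symm (hg : IsKahlerMetricOn g Ω) (hΩ : IsOpen Ω)
    (hz : z ∈ Ω) (k l i j : Fin n) :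
    matW k (matWbar l g) z i j = matW i (matWbar j g) z k l := by
  calc matW k (matWbar l g) z i j
      = dirD _ _ _ (dirD (Pi.single j 1) (Pi.single j Complex.I) Complex.I fun w => g w i l) z :=
        dirD_congr hΩ hz fun w hw => hg.matWbar_symm hΩ hw l i j
    _ = dirD _ _ _ (dirD (Pi.single k 1) (Pi.single k Complex.I) (-Complex.I) fun w => g w i l) z :=
        dirD_comm hΩ (hg.smooth i l) hz
    _ = dirD _ _ _ (dirD (Pi.single i 1) (Pi.single i Complex.I) (-Complex.I) fun w => g w k l) z :=
        dirD_congr hΩ hz fun w hw => hg.matW_symm hw k i l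
    _ = matW i (matWbar j g) z k l := dirD_comm hΩ (hg.smooth k l) hz

lemma wder_trace_inv_mul (hΩ : IsOpen Ω) (hh : MatSmooth h Ω) (hd : ∀ w ∈ Ω, (h w).det ≠ 0)
    (hg : MatSmooth g Ω) (hz : z ∈ Ω) (k : Fin n) :
    wder k (fun w => ((h w)⁻¹ * g w).trace) z =
      (-((h z)⁻¹ * matW k h z * (h z)⁻¹) * g z + (h z)⁻¹ * matW k g z).trace := by
  rw [wder_eq_dirD, dirD_trace hΩ hz ((hh.inv hd).mul hg), matD_mul hΩ hz (hh.inv hd) hg,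
    matD_inv hΩ hz hh hd]

lemma wbar_trace_inv_mul (hΩ : IsOpen Ω) (hh : MatSmooth h Ω) (hd : ∀ w ∈ Ω, (h w).det ≠ 0)
    (hg : MatSmooth g Ω) (hz : z ∈ Ω) (l : Fin n) :
    wbar l (fun w => ((h w)⁻¹ * g w).trace) z =
      (-((h z)⁻¹ * matWbar l h z * (h z)⁻¹) * g z + (h z)⁻¹ * matWbar l g z).trace := by
  rw [wbar_eq_dirD, dirD_trace hΩ hz ((hh.inv hd).mul hg), matD_mul hΩ hz (hh.inv hd) hg,
    matD_inv hΩ hz hh hd]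

lemma wder_wbar_trace_inv_mul (hΩ : IsOpen Ω) (hh : MatSmooth h Ω)
    (hd : ∀ w ∈ Ω, (h w).det ≠ 0) (hg : MatSmooth g Ω) (hz : z ∈ Ω) (k l : Fin n) :
    wder k (wbar l fun w => ((h w)⁻¹ * g w).trace) z =
      (-((-((h z)⁻¹ * matW k h z * (h z)⁻¹) * matWbar l h z
            + (h z)⁻¹ * matW k (matWbar l h) z) * (h z)⁻¹
          + (h z)⁻¹ * matWbar l h z * -((h z)⁻¹ * matW k h z * (h z)⁻¹)) * g z
        + -((h z)⁻¹ * matWbar l h z * (h z)⁻¹) * matW k g z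
        + (-((h z)⁻¹ * matW k h z * (h z)⁻¹) * matWbar l g z
          + (h z)⁻¹ * matW k (matWbar l g) z)).trace := by
  have hi := hh.inv hd
  have hhl : MatSmooth (matWbar l h) Ω := hh.matD hΩ
  have hgl : MatSmooth (matWbar l g) Ω := hg.matD hΩ
  rw [wder_eq_dirD, dirD_congr hΩ hz fun w hw => wbar_trace_inv_mul hΩ hh hd hg hw l,
    dirD_trace hΩ hz ((((hi.mul hhl).mul hi).neg.mul hg).add (hi.mul hgl)),
    matD_add hΩ hz (((hi.mul hhl).mul hi).neg.mul hg) (hi.mul hgl),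
    matD_mul hΩ hz ((hi.mul hhl).mul hi).neg hg, matD_neg, matD_mul hΩ hz (hi.mul hhl) hi,
    matD_mul hΩ hz hi hhl, matD_mul hΩ hz hi hgl, matD_inv hΩ hz hh hd]

lemma RicciM_apply_eq (hΩ : IsOpen Ω) (hh : IsKahlerMetricOn h Ω) (hz : z ∈ Ω) (i j : Fin n) :
    RicciM h z i j = -(-((h z)⁻¹ * matW i h z * (h z)⁻¹) * matWbar j h z
      + (h z)⁻¹ * matW i (matWbar j h) z).trace := by
  have hm : MatSmooth h Ω := hh.smooth
  have hi := hm.inv hh.det_ne_zero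
  have hhl : MatSmooth (matWbar j h) Ω := hm.matD hΩ
  have hs : ∀ w ∈ Ω, (h w).det ∈ Complex.slitPlane := fun w hw => by
    have h := (hh.posdef w hw).det_pos
    exact Or.inl (Complex.pos_iff.1 h).1
  simp only [RicciM, Matrix.of_apply]
  rw [wder_eq_dirD, wbar_eq_dirD, dirD_congr hΩ hz fun w hw => dirD_log_det hΩ hw hm (hs w hw),
    dirD_trace hΩ hz (hi.mul hhl), matD_mul hΩ hz hi hhl, matD_inv hΩ hz hm hh.det_ne_zero]

lemma wder_wbar_log (hΩ : IsOpen Ω) {T : Cn n → ℂ} (hT : ContDiffOn ℝ (⊤ : ℕ∞) T Ω)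
    (hs : ∀ w ∈ Ω, T w ∈ Complex.slitPlane) (hz : z ∈ Ω) (k l : Fin n) :
    wder k (wbar l fun w => Complex.log (T w)) z =
      (T z)⁻¹ * (wder k (wbar l T) z - (T z)⁻¹ * (wder k T z * wbar l T z)) := by
  have hd : ∀ w ∈ Ω, DifferentiableAt ℝ T w := fun w hw => hT.differentiableAt_of_isOpen hΩ hw
  have h0 : T z ≠ 0 := Complex.slitPlane_ne_zero (hs z hz)
  have hl : ContDiffOn ℝ (⊤ : ℕ∞) (wbar l T) Ω := contDiffOn_dirD hΩ hT
  have hinv := hasDerivAt_inv h0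
  have h1 : ∀ w ∈ Ω, wbar l (fun w => Complex.log (T w)) w = (T w)⁻¹ * wbar l T w :=
    fun w hw => dirD_comp (Complex.hasDerivAt_log (hs w hw)) (hd w hw)
  rw [wder_eq_dirD, dirD_congr hΩ hz h1, dirD_mul ((hd z hz).fun_inv h0)
    (hl.differentiableAt_of_isOpen hΩ hz), dirD_comp hinv (hd z hz)]
  ring

end SecondDerivatives

/-- **Chern–Lu inequality (Theorem 4.3).**  Let `ω̃` (with matrix `gt`) and `ω` (with matrix
`g`) be Kähler metrics on `Ω ⊆ ℂⁿ` with `Ric ω̃ ≥ −ω̃` and holomorphic bisectional curvature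
of `ω` bounded above by `C₁ > 0`.  Then `v = log tr_{ω̃} ω` satisfies
`Δ_{ω̃} v ≥ −1 − 2 C₁ e^v` on `Ω`. -/
theorem chern_lu_inequality {n : ℕ} (Ω : Set (Cn n)) (hΩ : IsOpen Ω)
    (g gt : Cn n → Matrix (Fin n) (Fin n) ℂ)
    (hg : IsKahlerMetricOn g Ω) (hgt : IsKahlerMetricOn gt Ω)
    (C₁ : ℝ) (hC₁ : 0 < C₁)
    -- `Ric ω̃ ≥ −ω̃`:
    (hric : ∀ z ∈ Ω, (RicciM gt z + gt z).PosSemidef)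
    -- bisectional curvature of `ω` bounded above by `C₁`:
    (hbisec : ∀ z ∈ Ω, ∀ ξ η : Fin n → ℂ,
      (∑ i : Fin n, ∑ j : Fin n, ∑ k : Fin n, ∑ l : Fin n,
          curvT g z i j k l * ξ i * star (ξ j) * η k * star (η l)).re ≤
        C₁ * (herm g z ξ ξ).re * (herm g z η η).re) :
    ∀ z ∈ Ω,
      -1 - 2 * C₁ * Real.exp (Real.log ((Matrix.trace ((gt z)⁻¹ * g z)).re)) ≤
        cLap gt (fun w => Real.log ((Matrix.trace ((gt w)⁻¹ * g w)).re)) z := by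
  intro z hz
  rcases Nat.eq_zero_or_pos n with rfl | hn
  · simp only [Matrix.trace, cLap, Finset.univ_eq_empty, Finset.sum_empty, Complex.zero_re,
      Real.log_zero, Real.exp_zero]
    linarith
  have : Nonempty (Fin n) := ⟨⟨0, hn⟩⟩
  have hgs : MatSmooth g Ω := hg.smooth
  have hts : MatSmooth gt Ω := hgt.smooth
  have htd := hgt.det_ne_zero
  set T : Cn n → ℂ := fun w => ((gt w)⁻¹ * g w).trace
  have hTs : ContDiffOn ℝ (⊤ : ℕ∞) T Ω := ((hts.inv htd).mul hgs).trace
  have hTpos : ∀ w ∈ Ω, 0 < T w := fun w hw =>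
    (hgt.posdef w hw).inv.trace_mul_pos (hg.posdef w hw)
  have hTre : ∀ w ∈ Ω, T w = ((T w).re : ℂ) := fun w hw =>
    Complex.ext (by simp) (by simpa using (Complex.pos_iff.1 (hTpos w hw)).2.symm)
  have hslit : ∀ w ∈ Ω, T w ∈ Complex.slitPlane := fun w hw =>
    Or.inl (Complex.pos_iff.1 (hTpos w hw)).1
  have ht : 0 < (T z).re := (Complex.pos_iff.1 (hTpos z hz)).1
  have hT0 : T z ≠ 0 := (hTpos z hz).ne'
  have hlog : ∀ i j, wder i (wbar j fun w => ((Real.log (T w).re : ℝ) : ℂ)) z =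
      wder i (wbar j fun w => Complex.log (T w)) z := by
    intro i j
    rw [wder_eq_dirD, wbar_eq_dirD]
    refine dirD_congr hΩ hz fun w hw => dirD_congr hΩ hw fun y hy => ?_
    rw [Complex.ofReal_log (Complex.pos_iff.1 (hTpos y hy)).1.le, ← hTre y hy]
  set H := (gt z)⁻¹ with hH
  set G := (g z)⁻¹ with hG
  have hHpos : H.PosSemidef := (hgt.posdef z hz).inv.posSemidef
  have hGpos : G.PosSemidef := (hg.posdef z hz).inv.posSemidef
  have hgG : g z * G = 1 := Matrix.mul_nonsing_inv _ (hg.det_ne_zero z hz).isUnit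
  have hGg : G * g z = 1 := Matrix.nonsing_inv_mul _ (hg.det_ne_zero z hz).isUnit
  have hHh : H * gt z = 1 := Matrix.nonsing_inv_mul _ (htd z hz).isUnit
  set A : Fin n → Matrix (Fin n) (Fin n) ℂ := fun k => matW k g z - matW k gt z * H * g z with hA
  have hAH : ∀ l, (A l).conjTranspose = matWbar l g z - g z * H * matWbar l gt z := by
    intro l
    rw [hA, Matrix.conjTranspose_sub, Matrix.conjTranspose_mul, Matrix.conjTranspose_mul,
      hHpos.isHermitian.eq, (hg.posdef z hz).isHermitian.eq, hg.matWbar_eq hΩ hz,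
      hgt.matWbar_eq hΩ hz, mul_assoc]
  have hTk : ∀ k, wder k T z = (H * A k).trace := by
    intro k
    rw [wder_trace_inv_mul hΩ hts htd hgs hz, hA]
    congr 1
    noncomm_ring
  have hTl : ∀ l, wbar l T z = (H * (A l).conjTranspose).trace := by
    intro l
    rw [wbar_trace_inv_mul hΩ hts htd hgs hz, hAH, mul_sub, Matrix.trace_add, Matrix.trace_sub,
      neg_mul, Matrix.trace_neg, mul_assoc _ H (g z), Matrix.trace_mul_comm _ (H * g z)]
    simp only [mul_assoc]
    ring
  have hTl' : ∀ l, wbar l T z = star (wder l T z) := by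
    intro l
    rw [hTl, hTk, ← Matrix.trace_conjTranspose, Matrix.conjTranspose_mul, hHpos.isHermitian.eq,
      Matrix.trace_mul_comm]
  have hcurv : ∀ i j k l, curvT g z i j k l = -matW k (matWbar l g) z i j +
      ∑ p, ∑ q, G q p * matW k g z i q * matWbar l g z p j := fun i j k l => by
    simp only [curvT, matW_apply, matWbar_apply, hG]
  have hS : ∑ k, ∑ l, H l k * wder k (wbar l T) z =
      -(∑ k, ∑ l, H l k * ∑ i, ∑ j, H j i * curvT g z i j k l) +
        ∑ i, ∑ j, (H * g z * H) j i * RicciM gt z i j +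
        ∑ k, ∑ l, H l k * (H * A k * G * (A l).conjTranspose).trace := by
    have hTkl : ∀ k l, wder k (wbar l T) z = _ := wder_wbar_trace_inv_mul hΩ hts htd hgs hz
    simp only [hTkl, RicciM_apply_eq hΩ hgt hz, hAH, hcurv]
    exact sum_mul_trace_eq (hkb := fun k l => matW k (matWbar l gt) z)
      (gkb := fun k l => matW k (matWbar l g) z) hgG hGg (hgt.matW_symm hz)
      (hgt.matWbar_symm hΩ hz) (hgt.matW_matWbar_symm hΩ hz)
  have hcurv_le : (∑ k, ∑ l, H l k * ∑ i, ∑ j, H j i * curvT g z i j k l).re ≤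
      C₁ * (T z).re ^ 2 := sum_curvature_le hHpos (hbisec z hz)
  have hric_ge : -(T z).re ≤ (∑ i, ∑ j, (H * g z * H) j i * RicciM gt z i j).re := by
    have hP : (H * g z * H).PosSemidef := by
      simpa only [hHpos.isHermitian.eq] using
        (hg.posdef z hz).posSemidef.mul_mul_conjTranspose_same H
    have h1 := (Complex.le_def.1 (hP.trace_mul_nonneg (hric z hz))).1
    have h2 : (H * g z * H * (RicciM gt z + gt z)).trace =
        ∑ i, ∑ j, (H * g z * H) j i * RicciM gt z i j + T z := by
      rw [mul_add, Matrix.trace_add, mul_assoc _ H (gt z), hHh, mul_one, Finset.sum_comm]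
      rfl
    rw [h2, Complex.add_re, Complex.zero_re] at h1
    linarith
  have hsq := (Complex.le_def.1 (sum_mul_trace_conjTranspose_nonneg hHpos hGpos
    fun k => A k - ((T z)⁻¹ * wder k T z) • g z)).1
  have hstar : star (T z) = T z := by
    rw [hTre z hz]
    exact Complex.conj_ofReal _
  have hsq_eq : ∀ k l, (H * (A k - ((T z)⁻¹ * wder k T z) • g z) * G *
      (A l - ((T z)⁻¹ * wder l T z) • g z).conjTranspose).trace =
      (H * A k * G * (A l).conjTranspose).trace - (T z)⁻¹ * (wder k T z * wbar l T z) := by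
    intro k l
    have hgH : (g z).conjTranspose = g z := (hg.posdef z hz).isHermitian.eq
    have h1 : (H * A k * G * g z).trace = wder k T z := by
      rw [mul_assoc _ G, hGg, mul_one, hTk]
    have h2 : (H * g z * G * (A l).conjTranspose).trace = wbar l T z := by
      rw [mul_assoc H, hgG, mul_one, hTl]
    have h3 : (H * g z * G * g z).trace = T z := by
      rw [mul_assoc H, hgG, mul_one]
    rw [Matrix.conjTranspose_sub, Matrix.conjTranspose_smul, hgH]
    simp only [mul_sub, sub_mul, Matrix.mul_smul, Matrix.smul_mul, Matrix.trace_sub,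
      Matrix.trace_smul, smul_eq_mul, h1, h2, h3, star_mul', star_inv₀, hstar, ← hTl']
    field_simp
    ring
  have hcl : cLap gt (fun w => Real.log (T w).re) z =
      (T z).re⁻¹ * (∑ k, ∑ l, H l k *
        (wder k (wbar l T) z - (T z)⁻¹ * (wder k T z * wbar l T z))).re := by
    have h1 : ∀ i j, H j i * wder i (wbar j fun w => ((Real.log (T w).re : ℝ) : ℂ)) z =
        ((T z).re⁻¹ : ℝ) * (H j i *
          (wder i (wbar j T) z - (T z)⁻¹ * (wder i T z * wbar j T z))) := fun i j => by
      rw [hlog, wder_wbar_log hΩ hTs hslit hz, Complex.ofReal_inv, ← hTre z hz]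
      ring
    rw [← Complex.re_ofReal_mul, Finset.mul_sum]
    simp only [Finset.mul_sum, ← h1]
    rfl
  have hsum : (∑ k, ∑ l, H l k *
      (wder k (wbar l T) z - (T z)⁻¹ * (wder k T z * wbar l T z))).re ≥
      -(C₁ * (T z).re ^ 2) - (T z).re := by
    simp only [hsq_eq] at hsq
    simp only [mul_sub, Finset.sum_sub_distrib, Complex.sub_re, Complex.zero_re] at hsq ⊢
    rw [hS, Complex.add_re, Complex.add_re, Complex.neg_re]
    linarith
  change -1 - 2 * C₁ * Real.exp (Real.log (T z).re) ≤ cLap gt (fun w => Real.log (T w).re) z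
  rw [Real.exp_log ht, hcl]
  calc -1 - 2 * C₁ * (T z).re ≤ (T z).re⁻¹ * (-(C₁ * (T z).re ^ 2) - (T z).re) := by
        have h1 : (T z).re⁻¹ * (-(C₁ * (T z).re ^ 2) - (T z).re) = -1 - C₁ * (T z).re := by
          field_simp
          ring
        rw [h1]
        nlinarith [mul_pos hC₁ ht]
    _ ≤ _ := mul_le_mul_of_nonneg_left hsum (inv_nonneg.2 ht.le)
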